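/- If X is a path-connected Hausdorff space with basepoint x₀, then SC_n^*(X) = cat(S_n^*X) for every n ∈ ℕ₀. -/

import Mathlib

/-!
A subset `U` of `S_n^*X` admits a sphere filling if and only if its inclusion into `S_n^*X` is
nullhomotopic, so the two invariants minimize over the same covers.

Given a filling `s`, the maps `p ↦ s γ ((1 - t) p + t 1_n)` contract `U` to the constant map while
fixing the value at `1_n` (`isCatSet_of_isFillingDomain`). Conversely, a contraction of `U` to some
`g`, followed by a nullhomotopy of `g`, is a homotopy `K` in `C(Sⁿ, X)` from the inclusion to a
constant sphere, and `(1 - t) p ↦ K (t, γ) p` is then a filling (`isFillingDomain_of_isCatSet`).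
Its joint continuity at the centre of the ball holds because the polar coordinate map
`[0,1] × Sⁿ → B^{n+1}` is proper, hence remains a quotient map after taking the product with `U`
(`isQuotientMap_prod_polar`).
-/

open Metric Set ContinuousMap
open scoped RealInnerProductSpace

noncomputable section

universe u

/-- The unit sphere `Sⁿ` in `ℝ^{n+1}`. -/
abbrev Sph (n : ℕ) : Set (EuclideanSpace ℝ (Fin (n + 1))) := Metric.sphere 0 1

/-- The closed unit ball `B^{n+1}` in `ℝ^{n+1}`. -/
abbrev Ball (n : ℕ) : Set (EuclideanSpace ℝ (Fin (n + 1))) := Metric.closedBall 0 1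

/-- `S_nX`: the space of nullhomotopic continuous maps `Sⁿ → X`, with the compact-open
topology (as a subspace of `C(Sⁿ, X)`). -/
abbrev SphereMaps (n : ℕ) (X : Type*) [TopologicalSpace X] : Type _ :=
  {f : C(↥(Sph n), X) // ∃ x : X, f.Homotopic (ContinuousMap.const _ x)}

/-- `B_{n+1}X`: the space of continuous maps `B^{n+1} → X` with the compact-open topology. -/
abbrev BallMaps (n : ℕ) (X : Type*) [TopologicalSpace X] : Type _ := C(↥(Ball n), X)

/-- The inclusion `Sⁿ ↪ B^{n+1}`. -/
def sphIncl (n : ℕ) : C(↥(Sph n), ↥(Ball n)) :=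
  ⟨fun p => ⟨p.1, sphere_subset_closedBall p.2⟩, (continuous_subtype_val.subtype_mk _)⟩

/-- A sphere filling over `A ⊆ S_nX`: a continuous map `s : A → B_{n+1}X` with
`s(γ)|_{Sⁿ} = γ` for all `γ ∈ A`. -/
def IsSphereFilling {n : ℕ} {X : Type*} [TopologicalSpace X]
    (A : Set (SphereMaps n X)) (s : C(↥A, BallMaps n X)) : Prop :=
  ∀ γ : ↥A, (s γ).comp (sphIncl n) = (γ : SphereMaps n X).1

/-- A subset `A ⊆ S_nX` is a sphere filling domain if a sphere filling over `A` exists. -/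
def IsFillingDomain {n : ℕ} {X : Type*} [TopologicalSpace X] (A : Set (SphereMaps n X)) : Prop :=
  ∃ s : C(↥A, BallMaps n X), IsSphereFilling A s

/-- The basepoint `1_n = (1,0,…,0)` of the sphere `Sⁿ`. -/
def basePt (n : ℕ) : ↥(Sph n) :=
  ⟨EuclideanSpace.single (0 : Fin (n + 1)) (1 : ℝ), by
    rw [mem_sphere_zero_iff_norm, EuclideanSpace.norm_single]; norm_num⟩

/-- `S_n^*X`: the subspace of `S_nX` of maps sending the basepoint `1_n` to `x₀`. -/
def BasedSphereMaps (n : ℕ) (X : Type*) [TopologicalSpace X] (x₀ : X) :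
    Set (SphereMaps n X) :=
  {f | f.1 (basePt n) = x₀}

/-- The based `n`-spherical complexity `SC_n^*(X)`: the minimal number of subsets of
`S_n^*X`, open in `S_n^*X` and admitting sphere fillings, needed to cover `S_n^*X`. -/
def SCbased (n : ℕ) (X : Type*) [TopologicalSpace X] (x₀ : X) : ℕ∞ :=
  sInf {k : ℕ∞ | ∃ m : ℕ, k = m ∧ ∃ U : Fin m → Set (SphereMaps n X),
    (∀ i, U i ⊆ BasedSphereMaps n X x₀ ∧
      IsOpen (Subtype.val ⁻¹' U i : Set ↥(BasedSphereMaps n X x₀)) ∧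
      IsFillingDomain (U i)) ∧
    BasedSphereMaps n X x₀ ⊆ ⋃ i, U i}

/-- The inclusion map of a subset, as a continuous map. -/
def inclC {Y : Type*} [TopologicalSpace Y] (U : Set Y) : C(↥U, Y) :=
  ⟨Subtype.val, continuous_subtype_val⟩

/-- A subset of `Y` whose inclusion into `Y` is nullhomotopic. -/
def IsCatSet {Y : Type*} [TopologicalSpace Y] (U : Set Y) : Prop :=
  ∃ y : Y, (inclC U).Homotopic (ContinuousMap.const _ y)

/-- The Lusternik–Schnirelmann category of `Y`: the minimal number of open subsets with
nullhomotopic inclusion needed to cover `Y` (`⊤` if no finite cover exists). -/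
def LScat (Y : Type*) [TopologicalSpace Y] : ℕ∞ :=
  sInf {k : ℕ∞ | ∃ m : ℕ, k = m ∧ ∃ U : Fin m → Set Y,
    (∀ i, IsOpen (U i) ∧ IsCatSet (U i)) ∧ (⋃ i, U i) = univ}

/-- A filling `s` contracts `U` inside `S_n^*X`: precompose `s γ` with the straight-line
contraction of `B^{n+1}` to `1_n`, which keeps `1_n` fixed. -/
theorem isCatSet_of_isFillingDomain {n : ℕ} {X : Type*} [TopologicalSpace X] {x₀ : X}
    {U : Set (SphereMaps n X)} (hU : IsFillingDomain U) :
    IsCatSet (Subtype.val ⁻¹' U : Set ↥(BasedSphereMaps n X x₀)) := by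
  obtain ⟨s, hs⟩ := hU
  have hs' : ∀ (γ : ↥U) (p : ↥(Sph n)), s γ (sphIncl n p) = γ.1.1 p := fun γ p =>
    DFunLike.congr_fun (hs γ) p
  let c : C(unitInterval × ↥(Sph n), ↥(Ball n)) :=
    ⟨fun q => ⟨(1 - (q.1 : ℝ)) • q.2.1 + (q.1 : ℝ) • (basePt n).1,
      (convex_closedBall (0 : EuclideanSpace ℝ (Fin (n + 1))) 1)
        (sphere_subset_closedBall q.2.2) (sphere_subset_closedBall (basePt n).2)
        (by linarith [q.1.2.2]) q.1.2.1 (by ring)⟩, by fun_prop⟩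
  have c0 : ∀ p, c (0, p) = sphIncl n p := fun p => by
    apply Subtype.ext; simp [c, sphIncl]
  have c1 : ∀ p, c (1, p) = sphIncl n (basePt n) := fun p => by
    apply Subtype.ext; simp [c, sphIncl]
  have cb : ∀ t, c (t, basePt n) = sphIncl n (basePt n) := fun t => by
    apply Subtype.ext; simp [c, sphIncl, ← add_smul]
  let V : Set ↥(BasedSphereMaps n X x₀) := Subtype.val ⁻¹' U
  let toU : C(↥V, ↥U) := ⟨fun γ => ⟨γ.1.1, γ.2⟩, by fun_prop⟩
  have hbase : ∀ γ : ↥V, s (toU γ) (sphIncl n (basePt n)) = x₀ := fun γ =>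
    (hs' _ _).trans γ.1.2
  let E : C((unitInterval × ↥V) × ↥(Sph n), X) :=
    ⟨fun q => s (toU q.1.2) (c (q.1.1, q.2)), by fun_prop⟩
  -- Running the contraction from time `t` onwards is a nullhomotopy of the slice at time `t`.
  have hnull : ∀ q, ∃ x : X, (E.curry q).Homotopic (ContinuousMap.const _ x) := fun q =>
    ⟨x₀, ⟨⟨⟨fun r => s (toU q.2) (c (max r.1 q.1, r.2)), by fun_prop⟩, fun p => by
      simp [E], fun p => by
      change s (toU q.2) (c (max 1 q.1, p)) = x₀
      rw [max_eq_left (show q.1 ≤ 1 from unitInterval.le_one'), c1, hbase]⟩⟩⟩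
  let y : ↥(BasedSphereMaps n X x₀) :=
    ⟨⟨ContinuousMap.const _ x₀, x₀, ContinuousMap.Homotopic.refl _⟩, rfl⟩
  refine ⟨y, ⟨⟨⟨fun q => ⟨⟨E.curry q, hnull q⟩, ?_⟩, ?_⟩, ?_, ?_⟩⟩⟩
  · change s (toU q.2) (c (q.1, basePt n)) = x₀
    rw [cb, hbase]
  · exact (E.curry.continuous.subtype_mk _).subtype_mk _
  · intro γ
    apply Subtype.ext; apply Subtype.ext; ext p
    change s (toU γ) (c (0, p)) = γ.1.1.1 p
    rw [c0, hs']
    rfl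
  · intro γ
    apply Subtype.ext; apply Subtype.ext; ext p
    change s (toU γ) (c (1, p)) = x₀
    rw [c1, hbase]

/-- Polar coordinates `(t, p) ↦ (1 - t) p` on the ball; `t = 0` is the boundary sphere and
`t = 1` is the centre. -/
def polar (n : ℕ) : C(unitInterval × ↥(Sph n), ↥(Ball n)) :=
  ⟨fun q => ⟨(1 - (q.1 : ℝ)) • q.2.1, by
    have h0 := q.1.2.1
    have h1 := q.1.2.2
    rw [mem_closedBall_zero_iff, norm_smul, norm_eq_of_mem_sphere q.2, Real.norm_eq_abs,
      abs_of_nonneg (by linarith)]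
    linarith⟩, by fun_prop⟩

theorem norm_polar {n : ℕ} (q : unitInterval × ↥(Sph n)) :
    ‖(polar n q).1‖ = 1 - (q.1 : ℝ) := by
  have h1 := q.1.2.2
  change ‖(1 - (q.1 : ℝ)) • q.2.1‖ = _
  rw [norm_smul, norm_eq_of_mem_sphere q.2, Real.norm_eq_abs, abs_of_nonneg (by linarith), mul_one]

theorem polar_surjective (n : ℕ) : Function.Surjective (polar n) := by
  intro v
  have hv : ‖v.1‖ ≤ 1 := mem_closedBall_zero_iff.1 v.2
  by_cases h : v.1 = 0
  · exact ⟨(1, basePt n), Subtype.ext (by simp [polar, h])⟩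
  · have hne : ‖v.1‖ ≠ 0 := norm_ne_zero_iff.2 h
    refine ⟨(⟨1 - ‖v.1‖, by linarith, by linarith [norm_nonneg v.1]⟩,
      ⟨‖v.1‖⁻¹ • v.1, ?_⟩), Subtype.ext ?_⟩
    · rw [mem_sphere_zero_iff_norm, norm_smul, norm_inv, norm_norm, inv_mul_cancel₀ hne]
    · simp [polar, smul_smul, hne]

/-- The only identifications made by `polar` are those collapsing `t = 1` to the centre. -/
theorem polar_eq {n : ℕ} {q r : unitInterval × ↥(Sph n)} (h : polar n q = polar n r) :
    q = r ∨ (q.1 = 1 ∧ r.1 = 1) := by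
  have hn : 1 - (q.1 : ℝ) = 1 - (r.1 : ℝ) := by rw [← norm_polar, ← norm_polar, h]
  have ht : q.1 = r.1 := Subtype.ext (by linarith)
  by_cases h1 : q.1 = 1
  · exact Or.inr ⟨h1, ht ▸ h1⟩
  · refine Or.inl (Prod.ext ht (Subtype.ext ?_))
    have hv : (1 - (q.1 : ℝ)) • q.2.1 = (1 - (r.1 : ℝ)) • r.2.1 := congrArg Subtype.val h
    rw [← ht] at hv
    refine smul_right_injective _ (fun h0 => h1 (Subtype.ext ?_)) hv
    change (q.1 : ℝ) = 1
    linarith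

/-- A product of `polar` with an identity is still a quotient map, because `polar` is proper. -/
theorem isQuotientMap_prod_polar (A : Type*) [TopologicalSpace A] (n : ℕ) :
    Topology.IsQuotientMap (Prod.map (id : A → A) (polar n)) := by
  have hp : IsProperMap (Prod.map (id : A → A) (polar n)) :=
    isProperMap_id.prodMap (polar n).continuous.isProperMap
  exact hp.isClosedMap.isQuotientMap hp.continuous
    (Function.surjective_id.prodMap (polar_surjective n))

/-- A homotopy from the inclusion of `U` into `C(Sⁿ, X)` to a constant map at a constant sphere
is a filling, read in polar coordinates. -/
theorem isFillingDomain_of_homotopy {n : ℕ} {X : Type*} [TopologicalSpace X]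
    {U : Set (SphereMaps n X)} {x : X} (i : C(↥U, C(↥(Sph n), X))) (hi : ∀ γ, i γ = γ.1.1)
    (K : i.Homotopy (ContinuousMap.const _ (ContinuousMap.const _ x))) :
    IsFillingDomain U := by
  let E : C(↥U × (unitInterval × ↥(Sph n)), X) :=
    ⟨fun q => K (q.2.1, q.1) q.2.2, by fun_prop⟩
  have hq := isQuotientMap_prod_polar ↥U n
  let q : C(↥U × (unitInterval × ↥(Sph n)), ↥U × ↥(Ball n)) :=
    ⟨Prod.map id (polar n), hq.continuous⟩
  have hE : Function.FactorsThrough E q := by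
    rintro ⟨γ, a⟩ ⟨δ, b⟩ h
    obtain ⟨rfl, h2⟩ : γ = δ ∧ polar n a = polar n b := Prod.ext_iff.1 h
    rcases polar_eq h2 with rfl | ⟨ha, hb⟩
    · rfl
    · change K (a.1, γ) a.2 = K (b.1, γ) b.2
      rw [ha, hb, K.apply_one]
      rfl
  have hqq : Topology.IsQuotientMap q := hq
  let F : C(↥U × ↥(Ball n), X) := hqq.lift E hE
  have hF : ∀ γ a, F (γ, polar n a) = K (a.1, γ) a.2 := fun γ a =>
    DFunLike.congr_fun (hqq.lift_comp E hE) (γ, a)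
  refine ⟨F.curry, fun γ => ?_⟩
  ext p
  have h0 : sphIncl n p = polar n (0, p) := Subtype.ext (by simp [polar, sphIncl])
  change F (γ, sphIncl n p) = γ.1.1 p
  rw [h0, hF, K.apply_zero, hi]

/-- If `U` contracts in `S_n^*X` to `g`, follow the contraction by a nullhomotopy of `g`. -/
theorem isFillingDomain_of_isCatSet {n : ℕ} {X : Type*} [TopologicalSpace X] {x₀ : X}
    {U : Set (SphereMaps n X)} (hsub : U ⊆ BasedSphereMaps n X x₀)
    (hU : IsCatSet (Subtype.val ⁻¹' U : Set ↥(BasedSphereMaps n X x₀))) :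
    IsFillingDomain U := by
  obtain ⟨⟨⟨g, x, ⟨G⟩⟩, hg⟩, ⟨H⟩⟩ := hU
  let V : Set ↥(BasedSphereMaps n X x₀) := Subtype.val ⁻¹' U
  let j : C(↥U, ↥V) := ⟨fun γ => ⟨⟨γ.1, hsub γ.2⟩, γ.2⟩, by fun_prop⟩
  let i : C(↥U, C(↥(Sph n), X)) := ⟨fun γ => γ.1.1, by fun_prop⟩
  let K₁ : i.Homotopy (ContinuousMap.const _ g) :=
    ⟨⟨fun q => (H (q.1, j q.2)).1.1, by fun_prop⟩,
      fun γ => by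
        change (H (0, j γ)).1.1 = γ.1.1
        rw [H.apply_zero]; rfl,
      fun γ => by
        change (H (1, j γ)).1.1 = g
        rw [H.apply_one]; rfl⟩
  let K₂ : (ContinuousMap.const ↥U g).Homotopy
      (ContinuousMap.const _ (ContinuousMap.const _ x)) :=
    ⟨⟨fun q => G.toContinuousMap.curry q.1, by fun_prop⟩,
      fun γ => by
        ext p
        exact G.apply_zero p,
      fun γ => by
        ext p
        exact G.apply_one p⟩
  exact isFillingDomain_of_homotopy i (fun _ => rfl) (K₁.trans K₂)

/-- for a path-connected Hausdorff space, `SC_n^*(X) = cat(S_n^*X)`. -/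
theorem SCbased_eq_cat {X : Type*} [TopologicalSpace X] [PathConnectedSpace X] [T2Space X]
    (x₀ : X) (n : ℕ) :
    SCbased n X x₀ = LScat ↥(BasedSphereMaps n X x₀) := by
  unfold SCbased LScat
  congr 1
  ext k
  constructor
  · rintro ⟨m, rfl, U, hU, hcov⟩
    refine ⟨m, rfl, fun i => Subtype.val ⁻¹' U i,
      fun i => ⟨(hU i).2.1, isCatSet_of_isFillingDomain (hU i).2.2⟩, ?_⟩
    refine eq_univ_of_forall fun γ => ?_
    obtain ⟨i, hi⟩ := mem_iUnion.1 (hcov γ.2)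
    exact mem_iUnion.2 ⟨i, hi⟩
  · rintro ⟨m, rfl, V, hV, hcov⟩
    have hpre : ∀ i, (Subtype.val ⁻¹' (Subtype.val '' V i) :
        Set ↥(BasedSphereMaps n X x₀)) = V i := fun i =>
      preimage_image_eq _ Subtype.val_injective
    have hsub : ∀ i, Subtype.val '' V i ⊆ BasedSphereMaps n X x₀ := fun i =>
      Subtype.coe_image_subset _ _
    refine ⟨m, rfl, fun i => Subtype.val '' V i, fun i => ⟨hsub i, ?_, ?_⟩, ?_⟩
    · rw [hpre]
      exact (hV i).1
    · refine isFillingDomain_of_isCatSet (hsub i) ?_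
      rw [hpre]
      exact (hV i).2
    · intro γ hγ
      have h : (⟨γ, hγ⟩ : ↥(BasedSphereMaps n X x₀)) ∈ ⋃ i, V i := hcov ▸ mem_univ _
      obtain ⟨i, hi⟩ := mem_iUnion.1 h
      exact mem_iUnion.2 ⟨i, _, hi, rfl⟩

end
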